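/- arXiv:2208.07154 — 2 statements merged into one kernel-verified Lean document; each statement's English description precedes it below -/
import Mathlib

section
/- For every irrational x ∈ (0,1) the denominators of the convergents of its odd continued fraction expansion satisfy q_{n−1} > 0 for n ≥ 1 and a_n(x) − 2 + G < q_n/q_{n−1} < a_n(x) + G for every n ≥ 1 (in particular q_n > 0 for all n ≥ 0). -/
open Real MeasureTheory Filter Set

namespace OCF

/-- The golden ratio `G = (1+√5)/2`. -/
noncomputable def G : ℝ := (1 + Real.sqrt 5) / 2

/-- `g = (√5-1)/2`. -/
noncomputable def gg : ℝ := (Real.sqrt 5 - 1) / 2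

/-- The odd Gauss map. -/
noncomputable def T (x : ℝ) : ℝ :=
  if x = 0 then 0
  else if Odd ⌊1 / x⌋ then Int.fract (1 / x) else 1 - Int.fract (1 / x)

/-- `eps x n` is `ε_n(x)`; by convention `ε_0(x) = 1`. -/
noncomputable def eps (x : ℝ) : ℕ → ℤ
  | 0 => 1
  | n + 1 => if Odd ⌊1 / (T^[n] x)⌋ then 1 else -1

/-- `a x n` is the `n`-th odd partial quotient `a_n(x)` (for `n ≥ 1`). -/
noncomputable def a (x : ℝ) : ℕ → ℤ
  | 0 => 1
  | n + 1 => if Odd ⌊1 / (T^[n] x)⌋ then ⌊1 / (T^[n] x)⌋ else 1 + ⌊1 / (T^[n] x)⌋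

/-- `p x (n+1)` is the convergent numerator `p_n`; `p x 0 = p_{-1} = 1`, `p x 1 = p_0 = 0`. -/
noncomputable def p (x : ℝ) : ℕ → ℝ
  | 0 => 1
  | 1 => 0
  | n + 2 => (a x (n + 1) : ℝ) * p x (n + 1) + (eps x n : ℝ) * p x n

/-- `q x (n+1)` is the convergent denominator `q_n`; `q x 0 = q_{-1} = 0`, `q x 1 = q_0 = 1`. -/
noncomputable def q (x : ℝ) : ℕ → ℝ
  | 0 => 0
  | 1 => 1
  | n + 2 => (a x (n + 1) : ℝ) * q x (n + 1) + (eps x n : ℝ) * q x n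

end OCF

open OCF

/-!
With `φ = G`, the ratios `r n = q_n / q_{n-1}` satisfy `r (n + 1) = a_{n+1} + ε_n / r n`, so the
claim is that every correction `ε_n / r n` lies in `(φ - 2, φ)`. The digit condition
`a_n + ε_n ≥ 2` turns the lower bound `r n > a_n - 2 + φ` into `r n > φ - ε_n`, and
`φ ^ 2 = φ + 1` says precisely that the increasing function `ε ↦ ε / (φ - ε)` on `[-1, 1]` has the
end values `φ - 2` and `φ`. Hence the lower bound alone propagates by induction and yields the
upper bound along the way.
-/

namespace OCF

open scoped goldenRatio

lemma div_mem_Ioo_of_goldenRatio_sub_lt {ε r : ℝ} (hε : |ε| ≤ 1) (hr : φ - ε < r) :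
    ε / r ∈ Ioo (φ - 2) φ := by
  obtain ⟨neg_one_le, le_one⟩ := abs_le.1 hε
  have one_lt : 1 < φ := one_lt_goldenRatio
  have lt_two : φ < 2 := goldenRatio_lt_two
  have r_pos : 0 < r := by linarith
  refine ⟨(lt_div_iff₀ r_pos).2 ?_, (div_lt_iff₀ r_pos).2 ?_⟩
  · calc (φ - 2) * r < (φ - 2) * (φ - ε) := mul_lt_mul_of_neg_left hr (by linarith)
      _ = ε - (φ - 1) * (ε + 1) := by linear_combination goldenRatio_sq
      _ ≤ ε := sub_le_self _ (mul_nonneg (by linarith) (by linarith))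
  · calc ε ≤ ε + (φ + 1) * (1 - ε) :=
          le_add_of_nonneg_right (mul_nonneg (by linarith) (by linarith))
      _ = φ * (φ - ε) := by linear_combination -goldenRatio_sq
      _ < φ * r := mul_lt_mul_of_pos_left hr goldenRatio_pos

lemma pos_and_div_sub_mem_Ioo_of_recurrence {b ε s : ℕ → ℝ} (hs₀ : s 0 = 0) (hs₁ : 0 < s 1)
    (hs : ∀ n, s (n + 2) = b (n + 1) * s (n + 1) + ε n * s n)
    (hε : ∀ n, |ε (n + 1)| ≤ 1) (hb : ∀ n, 2 ≤ b (n + 1) + ε (n + 1)) (n : ℕ) :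
    0 < s (n + 1) ∧ s (n + 2) / s (n + 1) - b (n + 1) ∈ Ioo (φ - 2) φ := by
  induction n with
  | zero =>
    have ratio_eq : s 2 / s 1 - b 1 = 0 := by
      rw [hs 0, hs₀, mul_zero, add_zero, mul_div_cancel_right₀ _ hs₁.ne', sub_self]
    rw [zero_add, zero_add, ratio_eq]
    exact ⟨hs₁, sub_neg.2 goldenRatio_lt_two, goldenRatio_pos⟩
  | succ n ih =>
    obtain ⟨s_pos, ratio_lower, -⟩ := ih
    have sub_lt_ratio : φ - ε (n + 1) < s (n + 2) / s (n + 1) := by linarith [hb n]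
    have ratio_pos : 0 < s (n + 2) / s (n + 1) := by
      linarith [le_of_abs_le (hε n), one_lt_goldenRatio]
    have s_succ_pos : 0 < s (n + 2) := (div_pos_iff_of_pos_right s_pos).1 ratio_pos
    have ratio_succ :
        s (n + 3) / s (n + 2) - b (n + 2) = ε (n + 1) / (s (n + 2) / s (n + 1)) := by
      rw [hs (n + 1)]
      field_simp
      ring
    exact ⟨s_succ_pos, ratio_succ ▸ div_mem_Ioo_of_goldenRatio_sub_lt (hε n) sub_lt_ratio⟩

section Digits

variable {x : ℝ} {n : ℕ}

lemma irrational_fract_one_div (hx : Irrational x) : Irrational (Int.fract (1 / x)) := by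
  rw [one_div]
  exact hx.inv.sub_intCast _

lemma irrational_T (hx : Irrational x) : Irrational (T x) := by
  have fract_irrational := irrational_fract_one_div hx
  rw [T, if_neg hx.ne_zero]
  split_ifs
  · exact fract_irrational
  · exact_mod_cast fract_irrational.intCast_sub 1

lemma T_mem_Ioo (hx : Irrational x) : T x ∈ Ioo 0 1 := by
  have fract_pos : 0 < Int.fract (1 / x) :=
    (Int.fract_nonneg _).lt_of_ne' (irrational_fract_one_div hx).ne_zero
  have fract_lt_one := Int.fract_lt_one (1 / x)
  rw [T, if_neg hx.ne_zero]
  split_ifs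
  · exact ⟨fract_pos, fract_lt_one⟩
  · exact ⟨sub_pos.2 fract_lt_one, sub_lt_self 1 fract_pos⟩

lemma iterate_T_mem_Ioo (hirr : Irrational x) (hx : x ∈ Ioo 0 1) (n : ℕ) :
    T^[n] x ∈ Ioo 0 1 := by
  have mapsTo : MapsTo T {y | Irrational y ∧ y ∈ Ioo 0 1} {y | Irrational y ∧ y ∈ Ioo 0 1} :=
    fun y hy ↦ ⟨irrational_T hy.1, T_mem_Ioo hy.1⟩
  exact (mapsTo.iterate n ⟨hirr, hx⟩).2

lemma abs_eps : |eps x n| = 1 := by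
  cases n with
  | zero => simp [eps]
  | succ n => rw [eps]; split_ifs <;> simp

lemma two_le_a_add_eps (hx : T^[n] x ∈ Ioc 0 1) : 2 ≤ a x (n + 1) + eps x (n + 1) := by
  have one_le_floor : 1 ≤ ⌊1 / T^[n] x⌋ :=
    Int.le_floor.2 (by exact_mod_cast one_le_one_div hx.1 hx.2)
  rw [a, eps]
  split_ifs with floor_odd
  · omega
  · obtain ⟨m, floor_eq⟩ := Int.not_odd_iff_even.1 floor_odd
    omega

end Digits

theorem q_pos_and_div_sub_mem_Ioo {x : ℝ} (hirr : Irrational x) (hx : x ∈ Ioo 0 1) (n : ℕ) :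
    0 < q x (n + 1) ∧ q x (n + 2) / q x (n + 1) - a x (n + 1) ∈ Ioo (φ - 2) φ := by
  refine pos_and_div_sub_mem_Ioo_of_recurrence (b := fun n ↦ a x n) (ε := fun n ↦ eps x n)
    rfl one_pos (fun _ ↦ rfl) (fun n ↦ ?_) (fun n ↦ ?_) n
  · exact_mod_cast abs_eps.le
  · exact_mod_cast two_le_a_add_eps (Ioo_subset_Ioc_self (iterate_T_mem_Ioo hirr hx n))

lemma G_eq_goldenRatio : G = φ := rfl

end OCF

/-- For every irrational `x ∈ (0,1)` the OCF convergent denominators satisfy `q_{n-1} > 0`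
for `n ≥ 1` (i.e. `q_n > 0` for all `n ≥ 0`), and
`a_n(x) - 2 + G < q_n/q_{n-1} < a_n(x) + G` for every `n ≥ 1`. -/
theorem ocf_denominator_bounds (x : ℝ) (hirr : Irrational x) (hx : x ∈ Set.Ioo (0 : ℝ) 1) :
    (∀ n : ℕ, 1 ≤ n → 0 < OCF.q x n) ∧
    (∀ n : ℕ, 1 ≤ n →
      (OCF.a x n : ℝ) - 2 + G < OCF.q x (n + 1) / OCF.q x n ∧
      OCF.q x (n + 1) / OCF.q x n < (OCF.a x n : ℝ) + G) := by
  refine ⟨fun n hn ↦ ?_, fun n hn ↦ ?_⟩ <;> obtain ⟨n, rfl⟩ := Nat.exists_eq_add_of_le' hn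
  · exact (q_pos_and_div_sub_mem_Ioo hirr hx n).1
  · obtain ⟨-, lower, upper⟩ := q_pos_and_div_sub_mem_Ioo hirr hx n
    rw [G_eq_goldenRatio]
    constructor <;> linarith
end

section
/- The measure Q∞ is stationary for the transition probability function Q: for every Borel set B ⊆ W one has ∫_W Q(w,B) Q∞(dw) = Q∞(B). -/
open Real MeasureTheory Filter Set
open scoped ENNReal NNReal Classical

namespace OCF

/-- The map `u : W × X → W` of the RSCC; `uF w e i = u(w,(e,i))`. -/
noncomputable def uF (w : ℝ) (e i : ℤ) : ℝ :=
  if e = 1 then 1 / (i + w)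
  else if w < gg ^ 2 then 1 / (i - w) else 1 / (i - gg ^ 2)

/-- The probabilities `P : W × X → [0,∞)` of the RSCC; `PF w e i = P(w,(e,i))`. -/
noncomputable def PF (w : ℝ) (e i : ℤ) : ℝ :=
  if w < gg ^ 2 then
    (1 - w ^ 2) * (2 - (if i = 1 then 1 else 0)) /
      (2 * ((i : ℝ) - 1 + (if i = 1 then 1 else 0) + (e : ℝ) * w) * ((i : ℝ) + 1 + (e : ℝ) * w))
  else
    (1 + w) * (2 - (if i = 1 then 1 else 0)) * (if e = 1 then 1 else 0) /
      (((i : ℝ) - 1 + (if i = 1 then 1 else 0) + w) * ((i : ℝ) + 1 + w))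

/-- The transition probability function
`Q(w,B) = Σ_{(e,i) ∈ X : u(w,(e,i)) ∈ B} P(w,(e,i))`, where odd `i` is written as `2m+1`. -/
noncomputable def Qf (w : ℝ) (B : Set ℝ) : ℝ :=
  ∑' m : ℕ, ((if uF w 1 (2 * (m : ℤ) + 1) ∈ B then PF w 1 (2 * (m : ℤ) + 1) else 0)
           + (if uF w (-1) (2 * (m : ℤ) + 1) ∈ B then PF w (-1) (2 * (m : ℤ) + 1) else 0))

/-- The stationary probability measure `Q∞` on `W = [0,G]`. -/
noncomputable def Qinf : Measure ℝ :=
  (volume.restrict (Set.Icc (0 : ℝ) G)).withDensity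
    (fun w => ENNReal.ofReal ((3 * Real.log G)⁻¹ *
      (if w < gg ^ 2 then 1 / (1 + w) + 1 / (1 - w) else 1 / (1 + w))))

/-- The transition operator `U` of the Markov chain: `Uf(w) = Σ_{(e,i)} P(w,(e,i)) f(u(w,(e,i)))`. -/
noncomputable def U (f : ℝ → ℂ) : ℝ → ℂ := fun w =>
  ∑' m : ℕ, ((PF w 1 (2 * (m : ℤ) + 1) : ℂ) * f (uF w 1 (2 * (m : ℤ) + 1))
           + (PF w (-1) (2 * (m : ℤ) + 1) : ℂ) * f (uF w (-1) (2 * (m : ℤ) + 1)))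

/-- The `n`-step transition probability, as a measure-valued kernel: `Qiter 1 w = Q(w,·)` and
`Qiter (n+1) w B = ∫_W Qiter n w' B Q(w,dw')` (the transition measure `Q(w,·)` being purely
atomic with atom `u(w,(e,i))` of mass `P(w,(e,i))`). -/
noncomputable def Qiter : ℕ → ℝ → Measure ℝ
  | 0 => fun w => Measure.dirac w
  | n + 1 => fun w => Measure.sum (fun m : ℕ =>
      ENNReal.ofReal (PF w 1 (2 * (m : ℤ) + 1)) • Qiter n (uF w 1 (2 * (m : ℤ) + 1)) +
      ENNReal.ofReal (PF w (-1) (2 * (m : ℤ) + 1)) • Qiter n (uF w (-1) (2 * (m : ℤ) + 1)))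

end OCF

open OCF

/-!
Let `ρ` be the density of `Q∞`. In the coordinate `x = 1 / y`, the branch `(e, i)` of the chain is
the isometry `w ↦ i + e w`, and `ρ(w) P(w,(e,i))` turns out to depend on `w` only through
`x = i + e w`: up to the factor `(3 log G)⁻¹` it is `1 / (x (x + 1))` if `i = 1` and
`2 / (x² - 1)` if `i ≥ 3`. Since `g⁻² = 2 + g` separates the values of `x` with `i = 1` from
those with `i ≥ 3`, this is exactly `ρ(1 / x) / x²`, so each branch transports its share of
`Q∞` onto the restriction of `Q∞` to the image of the branch. In the coordinate `x` the images
of the branches `(-1, 2m + 1)` and `(1, 2m + 1)` are `(2m + g, 2m + 1]` and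
`(2m + 1, 2m + 2 + g]`, and these tile `(g, ∞)`, that is `0 < y < G`.
-/

namespace OCF

open ProbabilityTheory

section Measure

variable {α β : Type*} [MeasurableSpace α] [MeasurableSpace β]

lemma measurable_smul_dirac {p : α → ℝ≥0∞} {u : α → β} (hp : Measurable p)
    (hu : Measurable u) :
    Measurable fun a => p a • Measure.dirac (u a) := by
  refine Measure.measurable_of_measurable_coe _ fun B hB => ?_
  simp only [Measure.smul_apply, smul_eq_mul]
  exact hp.mul ((Measure.measurable_coe hB).comp (Measure.measurable_dirac.comp hu))

lemma bind_smul_dirac (μ : Measure α) {p : α → ℝ≥0∞} {u : α → β} (hp : Measurable p)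
    (hu : Measurable u) :
    μ.bind (fun a => p a • Measure.dirac (u a)) = (μ.withDensity p).map u := by
  ext B hB
  rw [Measure.bind_apply hB (measurable_smul_dirac hp hu).aemeasurable, Measure.map_apply hu hB,
    withDensity_apply _ (hu hB), ← lintegral_indicator (hu hB)]
  refine lintegral_congr fun a => ?_
  by_cases ha : u a ∈ B <;> simp [Measure.dirac_apply' _ hB, ha]

lemma bind_kernelSum {ι : Type*} [Countable ι] (μ : Measure α) (κ : ι → Kernel α β) :
    μ.bind (Kernel.sum κ) = Measure.sum fun i => μ.bind (κ i) := by
  ext B hB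
  simp only [Measure.sum_apply _ hB, Measure.bind_apply hB (Kernel.aemeasurable _),
    Kernel.sum_apply' _ _ hB]
  exact lintegral_tsum fun i => ((κ i).measurable_coe hB).aemeasurable

lemma sum_restrict_inv_Ioc_succ (μ : Measure ℝ) {t : ℕ → ℝ} (ht : Monotone t)
    (htop : Tendsto t atTop atTop) (h0 : 0 < t 0) :
    (Measure.sum fun m => μ.restrict (Ioc (t m) (t (m + 1)))⁻¹) = μ.restrict (Ioo 0 (t 0)⁻¹) := by
  have hunion : ⋃ m, Ioc (t m) (t (m + 1)) = Ioi (t 0) :=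
    iUnion_Ioc_map_succ_eq_Ioi (fun m => ht bot_le) (not_bddAbove_of_tendsto_atTop htop)
  rw [← inv_Ioi₀ h0, ← hunion, iUnion_inv, Measure.restrict_iUnion]
  · exact fun m n hmn => (ht.pairwise_disjoint_on_Ioc_succ hmn).preimage _
  · exact fun m => measurableSet_Ioc.inv

variable {f f' : ℝ → ℝ} {ρ p : ℝ → ℝ≥0∞} {s W : Set ℝ}

lemma map_restrict_withDensity_eq_of_jacobian (hs : MeasurableSet s) (hf : Measurable f)
    (hf' : ∀ x ∈ s, HasDerivWithinAt f (f' x) s x) (hinj : InjOn f s)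
    (hjac : ∀ x ∈ s, p x = ENNReal.ofReal |f' x| * ρ (f x)) :
    ((volume.restrict s).withDensity p).map f = (volume.restrict (f '' s)).withDensity ρ := by
  ext B hB
  rw [Measure.map_apply hf hB, withDensity_apply _ (hf hB), withDensity_apply _ hB,
    ← lintegral_indicator (hf hB), ← lintegral_indicator hB,
    lintegral_image_eq_lintegral_abs_deriv_mul hs hf' hinj]
  refine setLIntegral_congr_fun hs fun x hx => ?_
  by_cases hxB : f x ∈ B <;> simp [hxB, hjac x hx]

lemma map_withDensity_withDensity_eq_restrict_image (hs : MeasurableSet s) (hsW : s ⊆ W)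
    (hρ : Measurable ρ) (hp : Measurable p) (hf : Measurable f)
    (hf' : ∀ x ∈ s, HasDerivWithinAt f (f' x) s x) (hinj : InjOn f s) (hfW : MapsTo f s W)
    (hps : ∀ᵐ x ∂volume.restrict W, x ∉ s → p x = 0)
    (hjac : ∀ x ∈ s, ρ x * p x = ENNReal.ofReal |f' x| * ρ (f x)) :
    ((((volume.restrict W).withDensity ρ).withDensity p).map f) =
      ((volume.restrict W).withDensity ρ).restrict (f '' s) := by
  have hconc : ρ * p =ᵐ[volume.restrict W] s.indicator (ρ * p) := by
    filter_upwards [hps] with x hx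
    by_cases hxs : x ∈ s <;> simp [hxs, hx]
  rw [← withDensity_mul _ hρ hp, withDensity_congr_ae hconc, withDensity_indicator hs,
    Measure.restrict_restrict hs, inter_eq_left.2 hsW,
    map_restrict_withDensity_eq_of_jacobian (p := ρ * p) hs hf hf' hinj hjac, restrict_withDensity',
    Measure.restrict_restrict_of_subset hfW.image_subset]

end Measure

section GoldenMean

lemma gg_sq : gg ^ 2 = 1 - gg := by
  have h : Real.sqrt 5 ^ 2 = 5 := Real.sq_sqrt (by norm_num)
  unfold gg; linarith

lemma G_eq : G = 1 + gg := by unfold G gg; ring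

lemma gg_pos : 0 < gg := by
  linarith [G_eq, show 1 < G from Real.one_lt_goldenRatio]

lemma gg_lt_one : gg < 1 := by
  linarith [G_eq, show G < 2 from Real.goldenRatio_lt_two]

lemma gg_inv : gg⁻¹ = G := by
  rw [inv_eq_of_mul_eq_one_right]
  linarith [gg_sq, congrArg (gg * ·) G_eq]

lemma gg_sq_mul_two_add_gg : gg ^ 2 * (2 + gg) = 1 := by
  linear_combination (1 + gg) * gg_sq

end GoldenMean

section Density

/-- The density of `Q∞` with respect to Lebesgue measure on `W = [0, G]`. -/
noncomputable def density (w : ℝ) : ℝ :=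
  (3 * Real.log G)⁻¹ * (if w < gg ^ 2 then 1 / (1 + w) + 1 / (1 - w) else 1 / (1 + w))

lemma Qinf_eq_withDensity :
    Qinf = (volume.restrict (Icc 0 G)).withDensity fun w => ENNReal.ofReal (density w) :=
  rfl

lemma measurable_density : Measurable density :=
  (Measurable.ite measurableSet_Iio (by fun_prop) (by fun_prop)).const_mul _

lemma inv_three_mul_log_G_pos : 0 < (3 * Real.log G)⁻¹ := by
  have : 0 < Real.log G := Real.log_pos Real.one_lt_goldenRatio
  positivity

lemma density_of_lt {w : ℝ} (h0 : 0 ≤ w) (h : w < gg ^ 2) :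
    density w = (3 * Real.log G)⁻¹ * (2 / (1 - w ^ 2)) := by
  have hw : w < 1 := by linarith [gg_sq, gg_pos]
  have h1 : 1 - w ≠ 0 := by linarith
  have h2 : 1 - w ^ 2 ≠ 0 := by nlinarith
  rw [density, if_pos h]
  field_simp
  ring

lemma density_of_le {w : ℝ} (h : gg ^ 2 ≤ w) :
    density w = (3 * Real.log G)⁻¹ * (1 / (1 + w)) := by
  rw [density, if_neg h.not_gt]

lemma density_pos {w : ℝ} (hw : 0 ≤ w) : 0 < density w := by
  have hc := inv_three_mul_log_G_pos
  rcases lt_or_ge w (gg ^ 2) with h | h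
  · rw [density_of_lt hw h]
    have : 0 < 1 - w ^ 2 := by nlinarith [gg_sq, gg_pos]
    positivity
  · rw [density_of_le h]
    positivity

lemma density_le {w : ℝ} (hw : 0 ≤ w) : density w ≤ (3 * Real.log G)⁻¹ * (2 / gg) := by
  have hc := inv_three_mul_log_G_pos
  have hg := gg_pos
  rcases lt_or_ge w (gg ^ 2) with h | h
  · rw [density_of_lt hw h]
    gcongr
    nlinarith [gg_sq]
  · rw [density_of_le h]
    gcongr <;> linarith [gg_lt_one]

instance isFiniteMeasure_Qinf : IsFiniteMeasure Qinf := by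
  refine isFiniteMeasure_withDensity_ofReal (f := density) (HasFiniteIntegral.of_bounded
    (C := (3 * Real.log G)⁻¹ * (2 / gg)) ?_)
  filter_upwards [ae_restrict_mem measurableSet_Icc] with w hw
  rw [Real.norm_of_nonneg (density_pos hw.1).le]
  exact density_le hw.1

lemma ae_Qinf_mem_Ioo : ∀ᵐ w ∂Qinf, w ∈ Ioo 0 G := by
  refine (withDensity_absolutelyContinuous _ _).ae_le ?_
  rw [← Measure.restrict_congr_set Ioo_ae_eq_Icc]
  exact ae_restrict_mem measurableSet_Ioo

lemma density_inv_div_sq_of_le {x : ℝ} (h0 : 0 < x) (h : x ≤ 2 + gg) :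
    density x⁻¹ / x ^ 2 = (3 * Real.log G)⁻¹ * (1 / (x * (x + 1))) := by
  have hx : gg ^ 2 ≤ x⁻¹ := by
    rw [le_inv_comm₀ (by positivity [gg_pos]) h0, ← eq_inv_of_mul_eq_one_right gg_sq_mul_two_add_gg]
    exact h
  rw [density_of_le hx]
  field_simp

lemma density_inv_div_sq_of_lt {x : ℝ} (h : 2 + gg < x) :
    density x⁻¹ / x ^ 2 = (3 * Real.log G)⁻¹ * (2 / ((x - 1) * (x + 1))) := by
  have hg := gg_pos
  have hx0 : 0 < x := by linarith
  have hx : x⁻¹ < gg ^ 2 := by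
    rw [eq_inv_of_mul_eq_one_left gg_sq_mul_two_add_gg]
    gcongr
  have h1 : x - 1 ≠ 0 := by linarith
  have h2 : 1 - x⁻¹ ^ 2 = (x - 1) * (x + 1) / x ^ 2 := by field_simp; ring
  rw [density_of_lt (by positivity) hx, h2]
  field_simp

end Density

section Branch

/-- The states from which a transition with sign `e = ±1` has positive probability. For `e = 1`
the state `0` (a null set) is left out, so that the ranges of the two signs do not overlap. -/
noncomputable def branchDomain (e : ℤ) : Set ℝ :=
  if e = 1 then Ioc 0 G else Ico 0 (gg ^ 2)

variable {e i : ℤ} {w : ℝ}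

lemma measurableSet_branchDomain (e : ℤ) : MeasurableSet (branchDomain e) := by
  unfold branchDomain
  split_ifs
  exacts [measurableSet_Ioc, measurableSet_Ico]

lemma mem_branchDomain_one : w ∈ branchDomain 1 ↔ w ∈ Ioc 0 G := by simp [branchDomain]

lemma mem_branchDomain_neg_one : w ∈ branchDomain (-1) ↔ w ∈ Ico 0 (gg ^ 2) := by
  simp [branchDomain]

lemma branchDomain_subset (e : ℤ) : branchDomain e ⊆ Icc 0 G := by
  unfold branchDomain
  split_ifs
  · exact Ioc_subset_Icc_self
  · exact Ico_subset_Icc_self.trans (Icc_subset_Icc_right (by linarith [G_eq, gg_sq, gg_pos]))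

lemma uF_of_mem (he : e = 1 ∨ e = -1) (hw : w ∈ branchDomain e) (i : ℤ) :
    uF w e i = (i + e * w)⁻¹ := by
  rcases he with rfl | rfl
  · simp [uF]
  · simp [uF, (mem_branchDomain_neg_one.1 hw).2, sub_eq_add_neg]

lemma one_add_mul_mem_Ioc (he : e = 1 ∨ e = -1) (hw : w ∈ branchDomain e) :
    1 + e * w ∈ Ioc gg (2 + gg) := by
  rcases he with rfl | rfl
  · obtain ⟨h0, hG⟩ := mem_branchDomain_one.1 hw
    constructor <;> push_cast <;> linarith [G_eq, gg_lt_one]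
  · obtain ⟨h0, hg⟩ := mem_branchDomain_neg_one.1 hw
    constructor <;> push_cast <;> linarith [gg_sq, gg_pos]

lemma two_add_gg_lt_add_mul (he : e = 1 ∨ e = -1) (hw : w ∈ branchDomain e) (hi : 3 ≤ i) :
    2 + gg < i + e * w := by
  have hi' : (3 : ℝ) ≤ i := by exact_mod_cast hi
  linarith [(one_add_mul_mem_Ioc he hw).1]

lemma gg_lt_add_mul (he : e = 1 ∨ e = -1) (hw : w ∈ branchDomain e) (hi : 1 ≤ i) :
    gg < i + e * w := by
  have hi' : (1 : ℝ) ≤ i := by exact_mod_cast hi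
  linarith [(one_add_mul_mem_Ioc he hw).1]

lemma density_mul_PF (hw : w ∈ branchDomain e) (i : ℤ) :
    density w * PF w e i = (3 * Real.log G)⁻¹ * ((2 - if i = 1 then 1 else 0) /
      ((i + e * w - 1 + if i = 1 then 1 else 0) * (i + e * w + 1))) := by
  have h0 : 0 ≤ w := (branchDomain_subset e hw).1
  generalize hδ : (if i = 1 then 1 else 0 : ℝ) = δ
  have hden : (i - 1 + δ + e * w) * (i + 1 + e * w) = (i + e * w - 1 + δ) * (i + e * w + 1) := by
    ring
  rcases lt_or_ge w (gg ^ 2) with h | h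
  · have h1 : 1 - w ^ 2 ≠ 0 := by nlinarith [gg_sq, gg_pos]
    rw [density_of_lt h0 h, PF, if_pos h, hδ, mul_assoc 2, hden]
    field_simp
  · obtain rfl : e = 1 := by
      by_contra he
      exact h.not_gt (by simpa [branchDomain, he] using hw : 0 ≤ w ∧ w < gg ^ 2).2
    rw [density_of_le h, PF, if_neg h.not_gt, hδ, ← hden]
    simp only [Int.cast_one, one_mul, if_true]
    field_simp

lemma density_mul_PF_eq_density_inv_div_sq (he : e = 1 ∨ e = -1) (hi : i = 1 ∨ 3 ≤ i)
    (hw : w ∈ branchDomain e) :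
    density w * PF w e i = density (i + e * w)⁻¹ / (i + e * w) ^ 2 := by
  rw [density_mul_PF hw]
  rcases hi with rfl | hi
  · obtain ⟨hlt, hle⟩ := one_add_mul_mem_Ioc he hw
    rw [Int.cast_one, density_inv_div_sq_of_le (gg_pos.trans hlt) hle]
    norm_num [add_comm, mul_comm]
  · rw [density_inv_div_sq_of_lt (two_add_gg_lt_add_mul he hw hi), if_neg (by omega)]
    norm_num

lemma PF_eq_zero_of_notMem (he : e = 1 ∨ e = -1) (hw : w ∈ Ioc 0 G) (h : w ∉ branchDomain e)
    (i : ℤ) : PF w e i = 0 := by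
  rcases he with rfl | rfl
  · exact absurd (mem_branchDomain_one.2 hw) h
  · rw [mem_branchDomain_neg_one, mem_Ico, not_and, not_lt] at h
    simp [PF, (h hw.1.le).not_gt]

lemma PF_nonneg (he : e = 1 ∨ e = -1) (hi : i = 1 ∨ 3 ≤ i) (hw : w ∈ Ioc 0 G) :
    0 ≤ PF w e i := by
  by_cases h : w ∈ branchDomain e
  · have hx : 0 < i + e * w := gg_pos.trans (gg_lt_add_mul he h (by omega))
    refine nonneg_of_mul_nonneg_right (a := density w) ?_ (density_pos hw.1.le)
    rw [density_mul_PF_eq_density_inv_div_sq he hi h]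
    have := density_pos (inv_nonneg.2 hx.le)
    positivity
  · rw [PF_eq_zero_of_notMem he hw h]

lemma measurable_uF (e i : ℤ) : Measurable fun w => uF w e i := by
  unfold uF
  split_ifs
  · fun_prop
  · exact Measurable.ite measurableSet_Iio (by fun_prop) (by fun_prop)

lemma measurable_PF (e i : ℤ) : Measurable fun w => PF w e i :=
  Measurable.ite measurableSet_Iio (by fun_prop) (by fun_prop)

lemma hasDerivWithinAt_uF (he : e = 1 ∨ e = -1) (hi : 1 ≤ i) (hw : w ∈ branchDomain e) :
    HasDerivWithinAt (fun w => uF w e i) (-e / (i + e * w) ^ 2) (branchDomain e) w := by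
  have hx : (i + e * w : ℝ) ≠ 0 := (gg_pos.trans (gg_lt_add_mul he hw hi)).ne'
  have haff : HasDerivAt (fun w : ℝ => i + e * w) (e : ℝ) w := by
    simpa using ((hasDerivAt_id w).const_mul (e : ℝ)).const_add (i : ℝ)
  exact (haff.fun_inv hx).hasDerivWithinAt.congr (fun v hv => uF_of_mem he hv i)
    (uF_of_mem he hw i)

lemma injOn_uF (he : e = 1 ∨ e = -1) (i : ℤ) : InjOn (fun w => uF w e i) (branchDomain e) := by
  intro w hw v hv hwv
  have he0 : (e : ℝ) ≠ 0 := by rcases he with rfl | rfl <;> norm_num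
  simpa [uF_of_mem he hw, uF_of_mem he hv, he0] using hwv

lemma mapsTo_uF (he : e = 1 ∨ e = -1) (hi : 1 ≤ i) :
    MapsTo (fun w => uF w e i) (branchDomain e) (Icc 0 G) := by
  intro w hw
  have hx := gg_lt_add_mul he hw hi
  have hg := gg_pos
  simp only [uF_of_mem he hw, ← gg_inv]
  exact ⟨by positivity [hg.trans hx], by gcongr⟩

lemma map_uF_withDensity_PF (he : e = 1 ∨ e = -1) (hi : i = 1 ∨ 3 ≤ i) :
    (Qinf.withDensity fun w => ENNReal.ofReal (PF w e i)).map (fun w => uF w e i) =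
      Qinf.restrict ((fun w => uF w e i) '' branchDomain e) := by
  have hi1 : 1 ≤ i := by omega
  rw [Qinf_eq_withDensity]
  refine map_withDensity_withDensity_eq_restrict_image (measurableSet_branchDomain e)
    (branchDomain_subset e) measurable_density.ennreal_ofReal (measurable_PF e i).ennreal_ofReal
    (measurable_uF e i) (fun w hw => hasDerivWithinAt_uF he hi1 hw) (injOn_uF he i)
    (mapsTo_uF he hi1) ?_ fun w hw => ?_
  · rw [← Measure.restrict_congr_set Ioc_ae_eq_Icc]
    filter_upwards [ae_restrict_mem measurableSet_Ioc] with w hw hwe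
    rw [PF_eq_zero_of_notMem he hw hwe, ENNReal.ofReal_zero]
  · have habs : |(-e : ℝ)| = 1 := by rcases he with rfl | rfl <;> norm_num
    rw [← ENNReal.ofReal_mul (density_pos (branchDomain_subset e hw).1).le,
      density_mul_PF_eq_density_inv_div_sq he hi hw, ← ENNReal.ofReal_mul (abs_nonneg _),
      uF_of_mem he hw, abs_div, habs, abs_of_nonneg (sq_nonneg _), one_div_mul_eq_div]

lemma image_uF_one (i : ℤ) : (fun w => uF w 1 i) '' branchDomain 1 = (Ioc (i : ℝ) (i + G))⁻¹ := by
  rw [image_congr fun w hw => uF_of_mem (.inl rfl) hw i, ← image_inv_eq_inv]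
  simp [branchDomain, ← image_image (fun x : ℝ => x⁻¹) (fun w => (i : ℝ) + w),
    add_comm G]

lemma image_uF_neg_one (i : ℤ) :
    (fun w => uF w (-1) i) '' branchDomain (-1) = (Ioc (i - gg ^ 2 : ℝ) i)⁻¹ := by
  rw [image_congr fun w hw => uF_of_mem (.inr rfl) hw i, ← image_inv_eq_inv]
  simp [branchDomain, ← sub_eq_add_neg, ← image_image (fun x : ℝ => x⁻¹) (fun w => (i : ℝ) - w)]

end Branch

section Stationarity

lemma restrict_image_uF_add_restrict_image_uF (μ : Measure ℝ) (m : ℕ) :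
    μ.restrict ((fun w => uF w 1 (2 * m + 1)) '' branchDomain 1) +
        μ.restrict ((fun w => uF w (-1) (2 * m + 1)) '' branchDomain (-1)) =
      μ.restrict (Ioc (2 * m + gg) (2 * (m + 1 : ℕ) + gg))⁻¹ := by
  have hlow : 2 * (m : ℝ) + 1 - gg ^ 2 = 2 * m + gg := by linarith [gg_sq]
  have hupp : 2 * (m : ℝ) + 1 + G = 2 * (m + 1 : ℕ) + gg := by push_cast; linarith [G_eq]
  rw [image_uF_one, image_uF_neg_one]
  push_cast [hlow, hupp]
  rw [add_comm, ← Measure.restrict_union, ← union_inv, Ioc_union_Ioc_eq_Ioc]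
  · linarith [gg_lt_one]
  · linarith [gg_pos]
  · exact (Ioc_disjoint_Ioc_of_le le_rfl).preimage _
  · exact measurableSet_Ioc.inv

/-- The part of the transition probability `Q(w, ·)` carried by the single index `(e, i)`. -/
noncomputable def branchKernel (e i : ℤ) : Kernel ℝ ℝ where
  toFun w := ENNReal.ofReal (PF w e i) • Measure.dirac (uF w e i)
  measurable' := measurable_smul_dirac (measurable_PF e i).ennreal_ofReal (measurable_uF e i)

lemma branchKernel_apply (e i : ℤ) (w : ℝ) :
    branchKernel e i w = ENNReal.ofReal (PF w e i) • Measure.dirac (uF w e i) :=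
  rfl

/-- The transition probability function `Q` as a kernel. -/
noncomputable def transitionKernel : Kernel ℝ ℝ :=
  Kernel.sum fun m : ℕ => branchKernel 1 (2 * m + 1) + branchKernel (-1) (2 * m + 1)

lemma Qinf_bind_branchKernel {e i : ℤ} (he : e = 1 ∨ e = -1) (hi : i = 1 ∨ 3 ≤ i) :
    Qinf.bind (branchKernel e i) = Qinf.restrict ((fun w => uF w e i) '' branchDomain e) :=
  (bind_smul_dirac Qinf (measurable_PF e i).ennreal_ofReal (measurable_uF e i)).trans
    (map_uF_withDensity_PF he hi)

theorem transitionKernel_invariant_Qinf : transitionKernel.Invariant Qinf := by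
  have hodd (m : ℕ) : 2 * (m : ℤ) + 1 = 1 ∨ 3 ≤ 2 * (m : ℤ) + 1 := by omega
  have hmono : Monotone fun m : ℕ => 2 * (m : ℝ) + gg := fun m n hmn => by dsimp only; gcongr
  have htop : Tendsto (fun m : ℕ => 2 * (m : ℝ) + gg) atTop atTop :=
    tendsto_atTop_add_const_right _ _ (tendsto_natCast_atTop_atTop.const_mul_atTop two_pos)
  calc Qinf.bind transitionKernel
      = Measure.sum fun m : ℕ => Qinf.bind (branchKernel 1 (2 * m + 1)) +
          Qinf.bind (branchKernel (-1) (2 * m + 1)) := by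
        simp only [transitionKernel, bind_kernelSum, Measure.add_comp]
    _ = Measure.sum fun m : ℕ => Qinf.restrict (Ioc (2 * m + gg) (2 * (m + 1 : ℕ) + gg))⁻¹ := by
        simp only [Qinf_bind_branchKernel (.inl rfl) (hodd _),
          Qinf_bind_branchKernel (.inr rfl) (hodd _), restrict_image_uF_add_restrict_image_uF]
    _ = Qinf.restrict (Ioo 0 (2 * (0 : ℕ) + gg)⁻¹) :=
        sum_restrict_inv_Ioc_succ Qinf hmono htop (by simpa using gg_pos)
    _ = Qinf.restrict (Ioo 0 G) := by simp [gg_inv]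
    _ = Qinf := Measure.restrict_eq_self_of_ae_mem ae_Qinf_mem_Ioo

lemma toReal_branchKernel_apply {e i : ℤ} {w : ℝ} {B : Set ℝ} (hB : MeasurableSet B)
    (hP : 0 ≤ PF w e i) :
    (branchKernel e i w B).toReal = if uF w e i ∈ B then PF w e i else 0 := by
  by_cases hu : uF w e i ∈ B <;> simp [branchKernel_apply, Measure.dirac_apply' _ hB, hu, hP]

lemma Qf_eq_toReal_transitionKernel {B : Set ℝ} (hB : MeasurableSet B) {w : ℝ}
    (hw : w ∈ Ioc 0 G) : Qf w B = (transitionKernel w B).toReal := by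
  have hodd (m : ℕ) : 2 * (m : ℤ) + 1 = 1 ∨ 3 ≤ 2 * (m : ℤ) + 1 := by omega
  have hfin (e i : ℤ) : branchKernel e i w B ≠ ⊤ :=
    ENNReal.mul_ne_top ENNReal.ofReal_ne_top (measure_ne_top (Measure.dirac _) B)
  rw [transitionKernel, Kernel.sum_apply' _ _ hB, ENNReal.tsum_toReal_eq fun m => by
    simpa using ⟨hfin _ _, hfin _ _⟩]
  refine tsum_congr fun m => ?_
  rw [add_apply, Measure.add_apply, ENNReal.toReal_add (hfin _ _) (hfin _ _),
    toReal_branchKernel_apply hB (PF_nonneg (.inl rfl) (hodd m) hw),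
    toReal_branchKernel_apply hB (PF_nonneg (.inr rfl) (hodd m) hw)]

end Stationarity

end OCF

/-- The measure `Q∞` is stationary for the transition probability function `Q`:
for every Borel set `B ⊆ W = [0,G]`, `∫_W Q(w,B) Q∞(dw) = Q∞(B)`. -/
theorem ocf_Qinf_stationary (B : Set ℝ) (hB : MeasurableSet B) (hBW : B ⊆ Set.Icc (0 : ℝ) G) :
    ∫ w, Qf w B ∂Qinf = (Qinf B).toReal := by
  have hQ : ∀ᵐ w ∂Qinf, Qf w B = (transitionKernel w B).toReal := by
    filter_upwards [ae_Qinf_mem_Ioo] with w hw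
    exact Qf_eq_toReal_transitionKernel hB (Ioo_subset_Ioc_self hw)
  have hmeas : Measurable fun w => transitionKernel w B := transitionKernel.measurable_coe hB
  have hlint : ∫⁻ w, transitionKernel w B ∂Qinf = Qinf B := by
    rw [← Measure.bind_apply hB transitionKernel.measurable.aemeasurable,
      transitionKernel_invariant_Qinf.def]
  have hfin : ∀ᵐ w ∂Qinf, transitionKernel w B < ⊤ :=
    ae_lt_top hmeas (hlint ▸ measure_ne_top Qinf B)
  rw [integral_congr_ae hQ, integral_toReal hmeas.aemeasurable hfin, hlint]
end
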